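/- If d = 2, then for all x, y ∈ ℤ² with y ≠ 0, x ≠ 0 and x ≠ y, the strict triangle inequality ρ_2(x) + ρ_2(y - x) > ρ_2(y) holds (so that C_2(x, y) := (ρ_2(y-x) + ρ_2(x) - ρ_2(y))/(4aγ_2) is strictly positive). -/

import Mathlib

open MeasureTheory Real Filter Topology Asymptotics

/-- Fourier symbol `φ(θ) = ∑_z a(z) cos⟨z,θ⟩` of the random walk on `ℤ^d`. -/
noncomputable def phiSymb (d : ℕ) (a : (Fin d → ℤ) → ℝ) (θ : Fin d → ℝ) : ℝ :=
  ∑' z : Fin d → ℤ, a z * Real.cos (∑ i, (z i : ℝ) * θ i)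

/-- Transition probability `p(t;x,y) = (2π)^{-d} ∫_{[-π,π]^d} e^{φ(θ)t} cos⟨θ,y-x⟩ dθ`. -/
noncomputable def ptrans (d : ℕ) (a : (Fin d → ℤ) → ℝ) (t : ℝ) (x y : Fin d → ℤ) : ℝ :=
  ((2 * π) ^ d)⁻¹ *
    ∫ θ in Set.Icc (fun _ : Fin d => -π) (fun _ : Fin d => π),
      Real.exp (phiSymb d a θ * t) * Real.cos (∑ i, θ i * ((y i : ℝ) - (x i : ℝ)))

/-- Laplace transform `G_λ(x,y) = ∫_0^∞ e^{-λt} p(t;x,y) dt` (Green's function at `λ = 0`). -/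
noncomputable def Glam (d : ℕ) (a : (Fin d → ℤ) → ℝ) (lam : ℝ) (x y : Fin d → ℤ) : ℝ :=
  ∫ t in Set.Ioi (0 : ℝ), Real.exp (-lam * t) * ptrans d a t x y

/-- Hessian matrix `φ''(0)`, with entries `-∑_z a(z) z_i z_j`. -/
noncomputable def hessPhi (d : ℕ) (a : (Fin d → ℤ) → ℝ) : Matrix (Fin d) (Fin d) ℝ :=
  Matrix.of fun i j => -∑' z : Fin d → ℤ, a z * (z i : ℝ) * (z j : ℝ)

/-- `γ_d = (2π)^{-d/2} |det φ''(0)|^{-1/2}`. -/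
noncomputable def gammaConst (d : ℕ) (a : (Fin d → ℤ) → ℝ) : ℝ :=
  ((2 * π) ^ ((d : ℝ) / 2))⁻¹ * (Real.sqrt |(hessPhi d a).det|)⁻¹

/-- `ρ_d(x) = (a/(2π)^d) ∫_{[-π,π]^d} (cos⟨x,θ⟩ - 1)/φ(θ) dθ` for `x ≠ 0`, and `ρ_d(0) = 1`. -/
noncomputable def rhoConst (d : ℕ) (a : (Fin d → ℤ) → ℝ) (x : Fin d → ℤ) : ℝ :=
  if x = 0 then 1 else
    (-(a 0) / (2 * π) ^ d) *
      ∫ θ in Set.Icc (fun _ : Fin d => -π) (fun _ : Fin d => π),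
        (Real.cos (∑ i, (x i : ℝ) * θ i) - 1) / phiSymb d a θ

/-- `γ̃_d(z) = (1/(2(2π)^d)) ∫_{ℝ^d} ⟨v,z⟩² e^{⟨φ''(0)v,v⟩/2} dv`. -/
noncomputable def gammaTilde (d : ℕ) (a : (Fin d → ℤ) → ℝ) (z : Fin d → ℤ) : ℝ :=
  (2 * (2 * π) ^ d)⁻¹ *
    ∫ v : Fin d → ℝ, (∑ i, v i * (z i : ℝ)) ^ 2 *
      Real.exp ((∑ i, (hessPhi d a).mulVec v i * v i) / 2)

/-- The pairing `⟨x, θ⟩` of a lattice point with a frequency. -/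
noncomputable def latticePairing {d : ℕ} (x : Fin d → ℤ) (θ : Fin d → ℝ) : ℝ :=
  ∑ i, (x i : ℝ) * θ i

/-- Lebesgue measure on the cube `[-π,π]^d`. -/
noncomputable def cubeMeasure (d : ℕ) : Measure (Fin d → ℝ) :=
  volume.restrict (Set.Icc (fun _ : Fin d => -π) (fun _ : Fin d => π))

/-- The (unnormalized) resolvent kernel `∫ cos⟨x,θ⟩ / (lam - φ(θ)) dθ`. -/
noncomputable def resolventKernel {d : ℕ} (a : (Fin d → ℤ) → ℝ) (lam : ℝ) (x : Fin d → ℤ) : ℝ :=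
  ∫ θ, Real.cos (latticePairing x θ) / (lam - phiSymb d a θ) ∂cubeMeasure d

/-- The (unnormalized) potential kernel `∫ (1 - cos⟨x,θ⟩) / (lam - φ(θ)) dθ`. -/
noncomputable def potentialKernel {d : ℕ} (a : (Fin d → ℤ) → ℝ) (lam : ℝ) (x : Fin d → ℤ) : ℝ :=
  ∫ θ, (1 - Real.cos (latticePairing x θ)) / (lam - phiSymb d a θ) ∂cubeMeasure d

/-- The (unnormalized) Green function of the walk killed at the origin. -/
noncomputable def killedKernel {d : ℕ} (a : (Fin d → ℤ) → ℝ) (lam : ℝ) (y w : Fin d → ℤ) : ℝ :=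
  potentialKernel a lam y + potentialKernel a lam w - potentialKernel a lam (w - y)

/-- Symmetric jump rates on `ℤ^d` with total mass zero. -/
structure IsSymmetricRate {d : ℕ} (a : (Fin d → ℤ) → ℝ) : Prop where
  nonneg : ∀ z, z ≠ 0 → 0 ≤ a z
  symm : ∀ z, a (-z) = a z
  hasSum : HasSum a 0

section LatticePairing

variable {d : ℕ}

lemma latticePairing_add (x y : Fin d → ℤ) (θ : Fin d → ℝ) :
    latticePairing (x + y) θ = latticePairing x θ + latticePairing y θ := by
  simp [latticePairing, add_mul, Finset.sum_add_distrib]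

lemma latticePairing_neg (x : Fin d → ℤ) (θ : Fin d → ℝ) :
    latticePairing (-x) θ = -latticePairing x θ := by
  simp [latticePairing]

lemma latticePairing_zero (θ : Fin d → ℝ) : latticePairing (0 : Fin d → ℤ) θ = 0 := by
  simp [latticePairing]

lemma continuous_latticePairing (x : Fin d → ℤ) : Continuous (latticePairing x) := by
  unfold latticePairing
  fun_prop

instance : IsFiniteMeasure (cubeMeasure d) := by
  constructor
  rw [cubeMeasure, Measure.restrict_apply_univ]
  exact isCompact_Icc.measure_lt_top

lemma integral_exp_int_mul_I {n : ℤ} (hn : n ≠ 0) :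
    ∫ t in Set.Icc (-π) π, Complex.exp (Complex.I * ((n : ℝ) * t : ℝ)) = 0 := by
  rw [integral_Icc_eq_integral_Ioc,
    ← intervalIntegral.integral_of_le (by linarith [pi_pos])]
  have hc : Complex.I * (n : ℂ) ≠ 0 := by simp [hn]
  have h := integral_exp_mul_complex (a := -π) (b := π) hc
  have hper : Complex.exp (Complex.I * n * (π : ℝ)) = Complex.exp (Complex.I * n * ((-π : ℝ))) := by
    rw [Complex.exp_eq_exp_iff_exists_int]
    exact ⟨n, by push_cast; ring⟩
  rw [hper, sub_self, zero_div] at h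
  rw [← h]
  congr 1
  ext t
  push_cast
  ring_nf

/-- Orthogonality of characters on the cube. -/
lemma integral_cos_latticePairing {w : Fin d → ℤ} (hw : w ≠ 0) :
    ∫ θ, Real.cos (latticePairing w θ) ∂cubeMeasure d = 0 := by
  obtain ⟨j, hj⟩ : ∃ j, w j ≠ 0 := Function.ne_iff.mp hw
  have hμ : cubeMeasure d =
      Measure.pi fun _ : Fin d => (volume : Measure ℝ).restrict (Set.Icc (-π) π) := by
    rw [cubeMeasure, ← Set.pi_univ_Icc, volume_pi, Measure.restrict_pi_pi]
  have hprod : ∫ θ, ∏ i, Complex.exp (Complex.I * ((w i : ℝ) * θ i : ℝ)) ∂cubeMeasure d = 0 := by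
    rw [hμ, integral_fintype_prod_eq_prod
      (f := fun i t => Complex.exp (Complex.I * ((w i : ℝ) * t : ℝ)))]
    exact Finset.prod_eq_zero (Finset.mem_univ j) (integral_exp_int_mul_I hj)
  have hexp : ∀ θ : Fin d → ℝ, ∏ i, Complex.exp (Complex.I * ((w i : ℝ) * θ i : ℝ)) =
      Complex.exp ((latticePairing w θ : ℝ) * Complex.I) := by
    intro θ
    rw [← Complex.exp_sum, ← Finset.mul_sum, ← Complex.ofReal_sum, mul_comm]
    rfl
  simp_rw [hexp] at hprod
  have hint : Integrable (fun θ => Complex.exp ((latticePairing w θ : ℝ) * Complex.I))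
      (cubeMeasure d) := by
    refine Integrable.of_bound (C := 1) ?_ (.of_forall fun θ => ?_)
    · have := continuous_latticePairing w
      exact Continuous.aestronglyMeasurable (by fun_prop)
    · rw [Complex.norm_exp_ofReal_mul_I]
  have h := integral_re hint
  simp only [RCLike.re_eq_complex_re, Complex.exp_ofReal_mul_I_re] at h
  rw [h, hprod, Complex.zero_re]

lemma cubeMeasure_real_univ_pos : 0 < (cubeMeasure d).real Set.univ := by
  rw [measureReal_def, cubeMeasure, Measure.restrict_apply_univ, Real.volume_Icc_pi_toReal]
  · exact Finset.prod_pos fun i _ => by linarith [pi_pos]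
  · intro i
    dsimp only
    linarith [pi_pos]

end LatticePairing

lemma one_sub_cos_add_le (s t : ℝ) :
    1 - Real.cos (s + t) ≤ 2 * (1 - Real.cos s) + 2 * (1 - Real.cos t) := by
  have key : ∀ u : ℝ, 1 - Real.cos u = 2 * Real.sin (u / 2) ^ 2 := fun u => by
    have h := Real.cos_sq (u / 2)
    rw [mul_div_cancel₀ u two_ne_zero] at h
    have := Real.sin_sq_add_cos_sq (u / 2)
    linarith
  rw [key, key, key, add_div, Real.sin_add]
  have hs := Real.sin_sq_add_cos_sq (s / 2)
  have ht := Real.sin_sq_add_cos_sq (t / 2)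
  set p := Real.sin (s / 2)
  set q := Real.cos (s / 2)
  set p' := Real.sin (t / 2)
  set q' := Real.cos (t / 2)
  have h1 : (p * q' + q * p') ^ 2 ≤ 2 * (p ^ 2 * q' ^ 2) + 2 * (q ^ 2 * p' ^ 2) := by
    nlinarith [sq_nonneg (p * q' - q * p')]
  have h2 : p ^ 2 * q' ^ 2 ≤ p ^ 2 := by nlinarith [mul_nonneg (sq_nonneg p) (sq_nonneg p')]
  have h3 : q ^ 2 * p' ^ 2 ≤ p' ^ 2 := by nlinarith [mul_nonneg (sq_nonneg p) (sq_nonneg p')]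
  linarith

namespace IsSymmetricRate

variable {d : ℕ} {a : (Fin d → ℤ) → ℝ}

lemma summable_norm (ha : IsSymmetricRate a) : Summable fun z => ‖a z‖ :=
  ha.hasSum.summable.norm

lemma hasSum_cos (ha : IsSymmetricRate a) (θ : Fin d → ℝ) :
    HasSum (fun z => a z * Real.cos (latticePairing z θ)) (phiSymb d a θ) := by
  refine (Summable.of_norm_bounded ha.summable_norm fun z => ?_).hasSum
  rw [norm_mul]
  exact mul_le_of_le_one_right (norm_nonneg _) (Real.abs_cos_le_one _)

lemma hasSum_sin (ha : IsSymmetricRate a) (θ : Fin d → ℝ) :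
    HasSum (fun z => a z * Real.sin (latticePairing z θ)) 0 := by
  have hs : Summable fun z => a z * Real.sin (latticePairing z θ) := by
    refine Summable.of_norm_bounded ha.summable_norm fun z => ?_
    rw [norm_mul]
    exact mul_le_of_le_one_right (norm_nonneg _) (Real.abs_sin_le_one _)
  have h := (Equiv.neg (Fin d → ℤ)).tsum_eq fun z => a z * Real.sin (latticePairing z θ)
  simp only [Equiv.neg_apply, ha.symm, latticePairing_neg, Real.sin_neg, mul_neg, tsum_neg] at h
  have h0 : ∑' z, a z * Real.sin (latticePairing z θ) = 0 := by linarith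
  exact h0 ▸ hs.hasSum

lemma hasSum_cos_add (ha : IsSymmetricRate a) (w : Fin d → ℤ) (θ : Fin d → ℝ) :
    HasSum (fun z => a z * Real.cos (latticePairing (w + z) θ))
      (phiSymb d a θ * Real.cos (latticePairing w θ)) := by
  have h := ((ha.hasSum_cos θ).mul_right (Real.cos (latticePairing w θ))).sub
    ((ha.hasSum_sin θ).mul_right (Real.sin (latticePairing w θ)))
  rw [zero_mul, sub_zero] at h
  refine h.congr_fun fun z => ?_
  rw [latticePairing_add, Real.cos_add]
  ring

lemma hasSum_one_sub_cos (ha : IsSymmetricRate a) (θ : Fin d → ℝ) :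
    HasSum (fun z => a z * (1 - Real.cos (latticePairing z θ))) (-phiSymb d a θ) := by
  simpa [mul_sub] using ha.hasSum.sub (ha.hasSum_cos θ)

lemma mul_one_sub_cos_nonneg (ha : IsSymmetricRate a) (z : Fin d → ℤ) (θ : Fin d → ℝ) :
    0 ≤ a z * (1 - Real.cos (latticePairing z θ)) := by
  rcases eq_or_ne z 0 with rfl | hz
  · simp [latticePairing_zero]
  · exact mul_nonneg (ha.nonneg z hz) (by linarith [Real.cos_le_one (latticePairing z θ)])

lemma phiSymb_nonpos (ha : IsSymmetricRate a) (θ : Fin d → ℝ) : phiSymb d a θ ≤ 0 := by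
  have := (ha.hasSum_one_sub_cos θ).nonneg fun z => ha.mul_one_sub_cos_nonneg z θ
  linarith

lemma continuous_phiSymb (ha : IsSymmetricRate a) : Continuous (phiSymb d a) := by
  unfold phiSymb
  refine continuous_tsum (fun z => by fun_prop) ha.summable_norm fun z θ => ?_
  rw [norm_mul]
  exact mul_le_of_le_one_right (norm_nonneg _) (Real.abs_cos_le_one _)

/-- Irreducibility makes every `1 - cos⟨x,·⟩` dominated by `-φ`. -/
lemma exists_one_sub_cos_le (ha : IsSymmetricRate a)
    (hirr : AddSubgroup.closure {z | 0 < a z} = ⊤) (x : Fin d → ℤ) :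
    ∃ C, 0 ≤ C ∧ ∀ θ, 1 - Real.cos (latticePairing x θ) ≤ C * -phiSymb d a θ := by
  have hx : x ∈ AddSubgroup.closure {z | 0 < a z} := hirr ▸ AddSubgroup.mem_top x
  induction hx using AddSubgroup.closure_induction with
  | mem z hz =>
    have hz : 0 < a z := hz
    refine ⟨(a z)⁻¹, by positivity, fun θ => ?_⟩
    rw [← div_eq_inv_mul, le_div_iff₀' hz]
    exact le_hasSum (ha.hasSum_one_sub_cos θ) z fun z' _ => ha.mul_one_sub_cos_nonneg z' θ
  | zero => exact ⟨0, le_rfl, fun θ => by simp [latticePairing_zero]⟩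
  | add x y _ _ hx hy =>
    obtain ⟨C, hC, h⟩ := hx
    obtain ⟨C', hC', h'⟩ := hy
    refine ⟨2 * C + 2 * C', by positivity, fun θ => ?_⟩
    rw [latticePairing_add]
    linarith [one_sub_cos_add_le (latticePairing x θ) (latticePairing y θ), h θ, h' θ]
  | neg x _ hx => simpa only [latticePairing_neg, Real.cos_neg] using hx

lemma exists_norm_integrand_le (ha : IsSymmetricRate a)
    (hirr : AddSubgroup.closure {z | 0 < a z} = ⊤) (x : Fin d → ℤ) :
    ∃ C, ∀ lam, 0 ≤ lam → ∀ θ,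
      ‖(1 - Real.cos (latticePairing x θ)) / (lam - phiSymb d a θ)‖ ≤ C := by
  obtain ⟨C, hC, h⟩ := ha.exists_one_sub_cos_le hirr x
  refine ⟨C, fun lam hl θ => ?_⟩
  have h1 := ha.phiSymb_nonpos θ
  have h2 := Real.cos_le_one (latticePairing x θ)
  rw [Real.norm_of_nonneg (div_nonneg (by linarith) (by linarith))]
  refine div_le_of_le_mul₀ (by linarith) hC ((h θ).trans ?_)
  exact mul_le_mul_of_nonneg_left (by linarith) hC

lemma integrable_cos_div (ha : IsSymmetricRate a) {lam : ℝ} (hl : 0 < lam) (x : Fin d → ℤ) :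
    Integrable (fun θ => Real.cos (latticePairing x θ) / (lam - phiSymb d a θ))
      (cubeMeasure d) := by
  refine Integrable.of_bound (C := 1 / lam) ?_ (.of_forall fun θ => ?_)
  · have h1 := continuous_latticePairing x
    have h2 := ha.continuous_phiSymb
    refine Measurable.aestronglyMeasurable ?_
    exact Measurable.div (by fun_prop) (by fun_prop)
  · have h1 := ha.phiSymb_nonpos θ
    rw [norm_div, Real.norm_of_nonneg (by linarith : 0 ≤ lam - phiSymb d a θ)]
    exact div_le_div₀ zero_le_one (Real.abs_cos_le_one _) hl (by linarith)

lemma potentialKernel_eq (ha : IsSymmetricRate a) {lam : ℝ} (hl : 0 < lam) (x : Fin d → ℤ) :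
    potentialKernel a lam x = resolventKernel a lam 0 - resolventKernel a lam x := by
  unfold potentialKernel resolventKernel
  rw [← integral_sub (ha.integrable_cos_div hl 0) (ha.integrable_cos_div hl x)]
  simp only [latticePairing_zero, Real.cos_zero, sub_div]

lemma killedKernel_eq (ha : IsSymmetricRate a) {lam : ℝ} (hl : 0 < lam) (y w : Fin d → ℤ) :
    killedKernel a lam y w = resolventKernel a lam 0 - resolventKernel a lam y
      - resolventKernel a lam w + resolventKernel a lam (w - y) := by
  simp only [killedKernel, ha.potentialKernel_eq hl]
  ring

lemma potentialKernel_nonneg (ha : IsSymmetricRate a) {lam : ℝ} (hl : 0 ≤ lam) (x : Fin d → ℤ) :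
    0 ≤ potentialKernel a lam x :=
  integral_nonneg fun θ => div_nonneg
    (by linarith [Real.cos_le_one (latticePairing x θ)]) (by linarith [ha.phiSymb_nonpos θ])

lemma tendsto_potentialKernel (ha : IsSymmetricRate a)
    (hirr : AddSubgroup.closure {z | 0 < a z} = ⊤) (x : Fin d → ℤ) :
    Tendsto (fun lam => potentialKernel a lam x) (𝓝[>] 0) (𝓝 (potentialKernel a 0 x)) := by
  obtain ⟨C, hC⟩ := ha.exists_norm_integrand_le hirr x
  obtain ⟨C', -, hC'⟩ := ha.exists_one_sub_cos_le hirr x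
  refine tendsto_integral_filter_of_dominated_convergence (fun _ => C) ?_ ?_
    (integrable_const C) (.of_forall fun θ => ?_)
  · refine .of_forall fun lam => ?_
    have h1 := continuous_latticePairing x
    have h2 := ha.continuous_phiSymb
    refine Measurable.aestronglyMeasurable ?_
    exact Measurable.div (by fun_prop) (by fun_prop)
  · filter_upwards [self_mem_nhdsWithin] with lam hl
    exact .of_forall fun θ => hC lam (le_of_lt hl) θ
  · rcases eq_or_ne (phiSymb d a θ) 0 with h | h
    · have h1 := hC' θ
      rw [h, neg_zero, mul_zero] at h1
      have h2 : 1 - Real.cos (latticePairing x θ) = 0 :=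
        le_antisymm h1 (by linarith [Real.cos_le_one (latticePairing x θ)])
      simp [h2]
    · have h0 : (0 : ℝ) - phiSymb d a θ ≠ 0 := by simpa using h
      refine Tendsto.div tendsto_const_nhds ?_ h0
      exact (tendsto_nhdsWithin_of_tendsto_nhds tendsto_id).sub_const _

lemma resolventKernel_neg (lam : ℝ) (x : Fin d → ℤ) :
    resolventKernel a lam (-x) = resolventKernel a lam x := by
  simp only [resolventKernel, latticePairing_neg, Real.cos_neg]

lemma integral_norm_le_resolventKernel_zero (ha : IsSymmetricRate a) {lam : ℝ} (hl : 0 < lam)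
    (x : Fin d → ℤ) :
    ∫ θ, ‖Real.cos (latticePairing x θ) / (lam - phiSymb d a θ)‖ ∂cubeMeasure d ≤
      resolventKernel a lam 0 := by
  refine integral_mono (ha.integrable_cos_div hl x).norm (ha.integrable_cos_div hl 0) fun θ => ?_
  have h1 : 0 < lam - phiSymb d a θ := by linarith [ha.phiSymb_nonpos θ]
  simp only [norm_div, latticePairing_zero, Real.cos_zero]
  rw [Real.norm_of_nonneg h1.le]
  exact div_le_div_of_nonneg_right (Real.abs_cos_le_one _) h1.le

lemma resolventKernel_zero_pos (ha : IsSymmetricRate a) {lam : ℝ} (hl : 0 < lam) :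
    0 < resolventKernel a lam 0 := by
  have hpos : ∀ θ, 0 < Real.cos (latticePairing 0 θ) / (lam - phiSymb d a θ) := fun θ => by
    rw [latticePairing_zero, Real.cos_zero]
    exact div_pos one_pos (by linarith [ha.phiSymb_nonpos θ])
  rw [resolventKernel, integral_pos_iff_support_of_nonneg (fun θ => (hpos θ).le)
    (ha.integrable_cos_div hl 0)]
  rw [Set.eq_univ_of_forall (s := Function.support _) fun θ => (hpos θ).ne']
  exact (ENNReal.toReal_pos_iff.mp cubeMeasure_real_univ_pos).1

/-- The resolvent equation. -/
lemma hasSum_resolventKernel (ha : IsSymmetricRate a) {lam : ℝ} (hl : 0 < lam) (w : Fin d → ℤ) :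
    HasSum (fun z => a z * resolventKernel a lam (w + z))
      (lam * resolventKernel a lam w - ∫ θ, Real.cos (latticePairing w θ) ∂cubeMeasure d) := by
  have hF : ∀ z, Integrable (fun θ => a z *
      (Real.cos (latticePairing (w + z) θ) / (lam - phiSymb d a θ))) (cubeMeasure d) :=
    fun z => (ha.integrable_cos_div hl (w + z)).const_mul (a z)
  have h := hasSum_integral_of_summable_integral_norm hF (by
    refine Summable.of_nonneg_of_le (fun z => integral_nonneg fun θ => norm_nonneg _) (fun z => ?_)
      (ha.summable_norm.mul_right (resolventKernel a lam 0))
    simp only [norm_mul (a z)]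
    rw [integral_const_mul]
    exact mul_le_mul_of_nonneg_left (ha.integral_norm_le_resolventKernel_zero hl _) (norm_nonneg _))
  simp only [integral_const_mul] at h
  refine (congrArg (HasSum _) ?_).mpr h
  have hcos : Integrable (fun θ => Real.cos (latticePairing w θ)) (cubeMeasure d) := by
    have h1 := continuous_latticePairing w
    exact Integrable.of_bound (C := 1)
      (Continuous.aestronglyMeasurable (by fun_prop)) (.of_forall fun θ => Real.abs_cos_le_one _)
  simp only [resolventKernel]
  rw [← integral_const_mul, ← integral_sub
    ((ha.integrable_cos_div hl w).const_mul lam) hcos]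
  congr 1
  ext θ
  have h1 : lam - phiSymb d a θ ≠ 0 := by linarith [ha.phiSymb_nonpos θ]
  have h2 := ((ha.hasSum_cos_add w θ).div_const (lam - phiSymb d a θ)).tsum_eq
  simp only [mul_div_assoc] at h2
  rw [h2]
  field_simp
  ring

/-- Minimum principle for bounded functions that are superharmonic off the origin. -/
lemma nonneg_of_superharmonic (ha : IsSymmetricRate a) {lam B : ℝ} (hl : 0 < lam)
    {u t : (Fin d → ℤ) → ℝ} (hB : ∀ w, -B ≤ u w) (hB0 : 0 ≤ B) (h0 : 0 ≤ u 0)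
    (hu : ∀ w, w ≠ 0 → HasSum (fun z => a z * u (w + z)) (t w)) (ht : ∀ w, w ≠ 0 → t w ≤ lam * u w)
    (h0a : a 0 ≤ 0) (w : Fin d → ℤ) : 0 ≤ u w := by
  set r := -a 0 / (lam - a 0) with hr
  have hden : 0 < lam - a 0 := by linarith
  have hr0 : 0 ≤ r := div_nonneg (by linarith) hden.le
  have hr1 : r < 1 := (div_lt_one hden).mpr (by linarith)
  have hind : ∀ (n : ℕ) w, -(B * r ^ n) ≤ u w := by
    intro n
    induction n with
    | zero => simpa using hB
    | succ n ih =>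
      intro w
      have hM : 0 ≤ B * r ^ n := by positivity
      rcases eq_or_ne w 0 with rfl | hw
      · have : 0 ≤ B * r ^ (n + 1) := by positivity
        linarith
      have hs : HasSum (fun z => a z * (u (w + z) + B * r ^ n)) (t w) := by
        simpa [mul_add] using (hu w hw).add (ha.hasSum.mul_right (B * r ^ n))
      have h1 := le_hasSum hs 0 fun z hz =>
        mul_nonneg (ha.nonneg z hz) (by linarith [ih (w + z)])
      rw [add_zero] at h1
      have h2 := h1.trans (ht w hw)
      have h3 : B * r ^ (n + 1) = B * r ^ n * -a 0 / (lam - a 0) := by rw [pow_succ, hr]; ring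
      rw [h3, ← neg_div, div_le_iff₀ hden]
      linarith
  have hlim : Tendsto (fun n : ℕ => -(B * r ^ n)) atTop (𝓝 0) := by
    simpa using ((tendsto_pow_atTop_nhds_zero_of_lt_one hr0 hr1).const_mul B).neg
  exact le_of_tendsto' hlim fun n => hind n w

lemma abs_resolventKernel_le (ha : IsSymmetricRate a) {lam : ℝ} (hl : 0 < lam)
    (x : Fin d → ℤ) : |resolventKernel a lam x| ≤ resolventKernel a lam 0 :=
  (norm_integral_le_integral_norm _).trans (ha.integral_norm_le_resolventKernel_zero hl x)

lemma resolventKernel_mul_le (ha : IsSymmetricRate a) (h0a : a 0 ≤ 0) {lam : ℝ} (hl : 0 < lam)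
    (y w : Fin d → ℤ) :
    resolventKernel a lam y * resolventKernel a lam w ≤
      resolventKernel a lam 0 * resolventKernel a lam (w - y) := by
  have hG0 := ha.resolventKernel_zero_pos hl
  have hG := fun x => abs_le.mp (ha.abs_resolventKernel_le hl x)
  set G := resolventKernel a lam
  rw [← sub_nonneg]
  refine ha.nonneg_of_superharmonic (u := fun w => G 0 * G (w - y) - G y * G w)
    (B := 2 * (G 0 * G 0)) hl (fun w => ?_) (by positivity) ?_
    (fun w hw => ?_) (fun w hw => ?_) h0a w (t := fun w =>
      G 0 * (lam * G (w - y) - ∫ θ, Real.cos (latticePairing (w - y) θ) ∂cubeMeasure d) -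
      G y * (lam * G w - ∫ θ, Real.cos (latticePairing w θ) ∂cubeMeasure d))
  · have h1 : -(G 0 * G 0) ≤ G 0 * G (w - y) := by nlinarith [(hG (w - y)).1]
    have h2 : G y * G w ≤ G 0 * G 0 := by
      refine (le_abs_self _).trans ?_
      rw [abs_mul]
      exact mul_le_mul (abs_le.mpr (hG y)) (abs_le.mpr (hG w)) (abs_nonneg _) hG0.le
    linarith
  · have : G (0 - y) = G y := by rw [zero_sub]; exact resolventKernel_neg lam y
    rw [this]
    linarith
  · have h1 := (ha.hasSum_resolventKernel hl (w - y)).mul_left (G 0)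
    have h2 := (ha.hasSum_resolventKernel hl w).mul_left (G y)
    refine (h1.sub h2).congr_fun fun z => ?_
    rw [show w + z - y = w - y + z by abel]
    ring
  · rw [integral_cos_latticePairing hw]
    rcases eq_or_ne (w - y) 0 with h | h
    · simp only [h, latticePairing_zero, Real.cos_zero, integral_const, smul_eq_mul, mul_one]
      have := mul_pos hG0 (cubeMeasure_real_univ_pos (d := d))
      nlinarith
    · rw [integral_cos_latticePairing h]
      linarith

lemma killedKernel_nonneg_of_pos (ha : IsSymmetricRate a) (h0a : a 0 ≤ 0) {lam : ℝ} (hl : 0 < lam)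
    (y w : Fin d → ℤ) : 0 ≤ killedKernel a lam y w := by
  have hG0 := ha.resolventKernel_zero_pos hl
  have h1 := ha.resolventKernel_mul_le h0a hl y w
  have h2 := mul_nonneg (ha.potentialKernel_nonneg hl.le y) (ha.potentialKernel_nonneg hl.le w)
  rw [ha.potentialKernel_eq hl, ha.potentialKernel_eq hl] at h2
  rw [ha.killedKernel_eq hl]
  exact (mul_nonneg_iff_of_pos_left hG0).mp (by linarith)

lemma tendsto_killedKernel (ha : IsSymmetricRate a)
    (hirr : AddSubgroup.closure {z | 0 < a z} = ⊤) (y w : Fin d → ℤ) :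
    Tendsto (fun lam => killedKernel a lam y w) (𝓝[>] 0) (𝓝 (killedKernel a 0 y w)) :=
  ((ha.tendsto_potentialKernel hirr y).add (ha.tendsto_potentialKernel hirr w)).sub
    (ha.tendsto_potentialKernel hirr (w - y))

lemma killedKernel_nonneg (ha : IsSymmetricRate a) (h0a : a 0 ≤ 0)
    (hirr : AddSubgroup.closure {z | 0 < a z} = ⊤) (y w : Fin d → ℤ) :
    0 ≤ killedKernel a 0 y w :=
  ge_of_tendsto (ha.tendsto_killedKernel hirr y w) <| by
    filter_upwards [self_mem_nhdsWithin] with lam hl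
    exact ha.killedKernel_nonneg_of_pos h0a hl y w

/-- Off the origin, the killed Green function dominates its values at neighbouring points. -/
lemma killedKernel_neighbor_le (ha : IsSymmetricRate a) (h0a : a 0 ≤ 0)
    (hirr : AddSubgroup.closure {z | 0 < a z} = ⊤) {w z : Fin d → ℤ} (y : Fin d → ℤ)
    (hw : w ≠ 0) (hz : z ≠ 0) :
    a 0 * killedKernel a 0 y w + a z * killedKernel a 0 y (w + z) ≤
      -∫ θ, Real.cos (latticePairing (w - y) θ) ∂cubeMeasure d := by
  have hlam : Tendsto (fun lam : ℝ => lam) (𝓝[>] 0) (𝓝 0) :=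
    tendsto_nhdsWithin_of_tendsto_nhds tendsto_id
  have hL := ((ha.tendsto_killedKernel hirr y w).const_mul (a 0)).add
    ((ha.tendsto_killedKernel hirr y (w + z)).const_mul (a z))
  have hR := (hlam.mul ((ha.tendsto_potentialKernel hirr w).sub
    (ha.tendsto_potentialKernel hirr (w - y)))).sub_const
      (∫ θ, Real.cos (latticePairing (w - y) θ) ∂cubeMeasure d)
  rw [zero_mul, zero_sub] at hR
  refine le_of_tendsto_of_tendsto hL hR ?_
  filter_upwards [self_mem_nhdsWithin] with lam hl
  have hl : 0 < lam := hl
  set G := resolventKernel a lam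
  have hs : HasSum (fun v => a v * killedKernel a lam y (w + v))
      (lam * (potentialKernel a lam w - potentialKernel a lam (w - y)) -
        ∫ θ, Real.cos (latticePairing (w - y) θ) ∂cubeMeasure d) := by
    have h := ((ha.hasSum.mul_right (G 0 - G y)).sub (ha.hasSum_resolventKernel hl w)).add
      (ha.hasSum_resolventKernel hl (w - y))
    rw [integral_cos_latticePairing hw] at h
    convert! h using 1
    · ext v
      rw [ha.killedKernel_eq hl, show w + v - y = w - y + v by abel]
      ring
    · rw [ha.potentialKernel_eq hl, ha.potentialKernel_eq hl]
      ring
  have h := sum_le_hasSum {0, z} (fun v hv => ?_) hs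
  · rwa [Finset.sum_pair hz.symm, add_zero] at h
  · refine mul_nonneg (ha.nonneg v fun h => hv (by simp [h])) ?_
    exact ha.killedKernel_nonneg_of_pos h0a hl y _

end IsSymmetricRate

/-- No single pair `{s, -s}` generates `ℤ²`. -/
lemma exists_mem_ne_ne_neg {S : Set (Fin 2 → ℤ)} (hS : AddSubgroup.closure S = ⊤)
    (s : Fin 2 → ℤ) : ∃ t ∈ S, t ≠ s ∧ t ≠ -s := by
  by_contra! h
  have hle : AddSubgroup.closure S ≤ AddSubgroup.zmultiples s := by
    rw [AddSubgroup.closure_le]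
    intro t ht
    by_cases hts : t = s
    · exact hts ▸ AddSubgroup.mem_zmultiples s
    · rw [h t ht hts]
      exact neg_mem (AddSubgroup.mem_zmultiples s)
  rw [hS, top_le_iff] at hle
  obtain ⟨m, hm⟩ := AddSubgroup.mem_zmultiples_iff.mp
    (hle ▸ AddSubgroup.mem_top (![1, 0] : Fin 2 → ℤ))
  obtain ⟨n, hn⟩ := AddSubgroup.mem_zmultiples_iff.mp
    (hle ▸ AddSubgroup.mem_top (![0, 1] : Fin 2 → ℤ))
  have h0 := congrFun hm 0
  have h1 := congrFun hm 1
  have h3 := congrFun hn 1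
  simp at h0 h1 h3
  rcases h1 with h1 | h1 <;> simp [h1] at h0 h3

/-- The Cayley graph of `ℤ²` stays connected after deleting the origin. -/
lemma eq_univ_of_add_mem {S R : Set (Fin 2 → ℤ)} (hS : AddSubgroup.closure S = ⊤)
    (hneg : ∀ s ∈ S, -s ∈ S) (hS0 : ∀ s ∈ S, s ≠ 0) (h0R : 0 ∈ R)
    (hR : ∀ w ∈ R, w ≠ 0 → ∀ s ∈ S, w + s ∈ R) {w₀ : Fin 2 → ℤ} (hw₀ : w₀ ∈ R) (hw₀0 : w₀ ≠ 0) :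
    R = Set.univ := by
  have translate : ∀ T : Set (Fin 2 → ℤ), (∀ w ∈ T, ∀ s ∈ S, w + s ∈ T) →
      ∀ v w, w ∈ T → w + v ∈ T := by
    intro T hT v
    have hv : v ∈ AddSubgroup.closure S := hS ▸ AddSubgroup.mem_top v
    have key : ∀ w, w ∈ T → w + v ∈ T ∧ w - v ∈ T := by
      induction hv using AddSubgroup.closure_induction with
      | mem s hs =>
        intro w hw
        exact ⟨hT w hw s hs, by simpa [sub_eq_add_neg] using hT w hw (-s) (hneg s hs)⟩
      | zero => intro w hw; simpa using hw
      | add x y _ _ hx hy =>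
        intro w hw
        refine ⟨?_, ?_⟩
        · rw [← add_assoc]; exact (hy _ (hx w hw).1).1
        · rw [← sub_sub]; exact (hy _ (hx w hw).2).2
      | neg x _ hx =>
        intro w hw
        exact ⟨by simpa [sub_eq_add_neg] using (hx w hw).2, by simpa using (hx w hw).1⟩
    exact fun w hw => (key w hw).1
  obtain ⟨s, hsS, hsR⟩ : ∃ s ∈ S, s ∈ R := by
    by_contra! h
    have hT := translate {w | w ∈ R ∧ w ≠ 0} (fun w hw s hs => ⟨hR w hw.1 hw.2 s hs, fun h0 => by
      have hw' : w = -s := eq_neg_of_add_eq_zero_left h0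
      exact h w (hw' ▸ hneg s hs) hw.1⟩) (-w₀) w₀ ⟨hw₀, hw₀0⟩
    exact hT.2 (add_neg_cancel w₀)
  have step : ∀ p ∈ S, p ∈ R → ∀ q ∈ S, q ≠ -p → q ∈ R := by
    intro p hp hpR q hq hqp
    have h1 := hR _ (hR p hpR (hS0 p hp) q hq) (fun h => hqp (eq_neg_of_add_eq_zero_right h)) _
      (hneg p hp)
    simpa using h1
  have hSR : ∀ q ∈ S, q ∈ R := by
    intro q hq
    by_cases hqs : q = -s
    · obtain ⟨t, ht, hts, hts'⟩ := exists_mem_ne_ne_neg hS s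
      have htR := step s hsS hsR t ht hts'
      exact step t ht htR q hq (by rw [hqs]; exact fun h => hts (neg_injective h).symm)
    · exact step s hsS hsR q hq hqs
  have hall := translate R fun w hw s hs => by
    by_cases h : w = 0
    · rw [h, zero_add]; exact hSR s hs
    · exact hR w hw h s hs
  exact Set.eq_univ_of_forall fun v => by simpa using hall v 0 h0R

/-- The killed Green function of an irreducible planar walk is strictly positive. -/
lemma IsSymmetricRate.killedKernel_pos {a : (Fin 2 → ℤ) → ℝ} (ha : IsSymmetricRate a)
    (h0a : a 0 ≤ 0) (hirr : AddSubgroup.closure {z | 0 < a z} = ⊤) {y w : Fin 2 → ℤ}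
    (hy : y ≠ 0) (hw : w ≠ 0) : 0 < killedKernel a 0 y w := by
  have hS0 : ∀ s, 0 < a s → s ≠ 0 := by
    rintro s hs rfl
    linarith
  have hcos : ∀ v : Fin 2 → ℤ, 0 ≤ ∫ θ, Real.cos (latticePairing v θ) ∂cubeMeasure 2 := by
    intro v
    rcases eq_or_ne v 0 with rfl | hv
    · simp only [latticePairing_zero, Real.cos_zero]
      exact integral_nonneg fun _ => zero_le_one
    · rw [integral_cos_latticePairing hv]
  have hK := ha.killedKernel_nonneg h0a hirr y
  refine (hK w).lt_of_ne' fun hKw => ?_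
  have hR : {v | killedKernel a 0 y v = 0} = Set.univ := by
    refine eq_univ_of_add_mem hirr (fun s hs => ?_) hS0 ?_ (fun v hv hv0 s hs => ?_) hKw hw
    · simpa [ha.symm] using hs
    · simp [killedKernel, potentialKernel, latticePairing_neg, latticePairing_zero]
    · have hs : 0 < a s := hs
      have h := ha.killedKernel_neighbor_le h0a hirr y hv0 (hS0 s hs)
      rw [show killedKernel a 0 y v = 0 from hv, mul_zero, zero_add] at h
      have h1 : killedKernel a 0 y (v + s) ≤ 0 := by
        by_contra! h2
        linarith [mul_pos hs h2, hcos (v - y)]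
      exact le_antisymm h1 (hK _)
  have hzero : ∀ v, killedKernel a 0 y v = 0 := fun v => hR.ge (Set.mem_univ v)
  obtain ⟨t, ht, -⟩ := exists_mem_ne_ne_neg hirr 0
  have h := ha.killedKernel_neighbor_le h0a hirr y hy (hS0 t ht)
  simp only [hzero, mul_zero, add_zero, sub_self, latticePairing_zero, Real.cos_zero,
    integral_const, smul_eq_mul, mul_one] at h
  linarith [cubeMeasure_real_univ_pos (d := 2)]

lemma rhoConst_eq {d : ℕ} (a : (Fin d → ℤ) → ℝ) {x : Fin d → ℤ} (hx : x ≠ 0) :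
    rhoConst d a x = -(a 0) / (2 * π) ^ d * potentialKernel a 0 x := by
  rw [rhoConst, if_neg hx, potentialKernel, cubeMeasure]
  congr 2
  ext θ
  rw [zero_sub, div_neg, ← neg_div, neg_sub]
  rfl

lemma summable_mul_coord_mul_coord {d : ℕ} {a : (Fin d → ℤ) → ℝ}
    (hvar : Summable fun z : Fin d → ℤ => (∑ i, ((z i : ℝ)) ^ 2) * a z) (i j : Fin d) :
    Summable fun z : Fin d → ℤ => a z * (z i : ℝ) * (z j : ℝ) := by
  refine Summable.of_norm_bounded hvar.norm fun z => ?_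
  have h : ∀ k, (z k : ℝ) ^ 2 ≤ ∑ i, ((z i : ℝ)) ^ 2 := fun k =>
    Finset.single_le_sum (f := fun i => (z i : ℝ) ^ 2) (fun i _ => sq_nonneg _) (Finset.mem_univ k)
  rw [mul_assoc, mul_comm (a z), norm_mul _ (a z), norm_mul _ (a z)]
  refine mul_le_mul_of_nonneg_right ?_ (norm_nonneg _)
  rw [Real.norm_of_nonneg ((sq_nonneg _).trans (h i)), norm_mul, Real.norm_eq_abs, Real.norm_eq_abs]
  nlinarith [h i, h j, sq_nonneg (|(z i : ℝ)| - |(z j : ℝ)|), sq_abs (z i : ℝ), sq_abs (z j : ℝ)]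

/-- The Hessian of the symbol of an irreducible walk is nondegenerate. -/
lemma IsSymmetricRate.det_hessPhi_ne_zero {d : ℕ} {a : (Fin d → ℤ) → ℝ} (ha : IsSymmetricRate a)
    (hvar : Summable fun z : Fin d → ℤ => (∑ i, ((z i : ℝ)) ^ 2) * a z)
    (hirr : AddSubgroup.closure {z | 0 < a z} = ⊤) : (hessPhi d a).det ≠ 0 := by
  intro hdet
  obtain ⟨v, hv, hMv⟩ := Matrix.exists_mulVec_eq_zero_iff.mpr hdet
  apply hv
  have hs : HasSum (fun z => a z * latticePairing z v ^ 2) 0 := by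
    have h : HasSum (fun z : Fin d → ℤ => ∑ i, ∑ j, a z * (z i : ℝ) * (z j : ℝ) * (v i * v j))
        (∑ i, ∑ j, (-hessPhi d a i j) * (v i * v j)) := by
      refine hasSum_sum fun i _ => hasSum_sum fun j _ => HasSum.mul_right _ ?_
      simpa [hessPhi] using (summable_mul_coord_mul_coord hvar i j).hasSum
    convert h using 1
    · ext z
      rw [latticePairing, sq, Finset.sum_mul_sum, Finset.mul_sum]
      refine Finset.sum_congr rfl fun i _ => ?_
      rw [Finset.mul_sum]
      exact Finset.sum_congr rfl fun j _ => by ring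
    · symm
      refine Finset.sum_eq_zero fun i _ => ?_
      have h1 := congrFun hMv i
      rw [Matrix.mulVec, dotProduct, Pi.zero_apply] at h1
      calc ∑ j, (-hessPhi d a i j) * (v i * v j)
          = -v i * ∑ j, hessPhi d a i j * v j := by
            rw [Finset.mul_sum]
            exact Finset.sum_congr rfl fun j _ => by ring
        _ = 0 := by rw [h1, mul_zero]
  have hnonneg : ∀ z, 0 ≤ a z * latticePairing z v ^ 2 := by
    intro z
    rcases eq_or_ne z 0 with rfl | hz
    · simp [latticePairing_zero]
    · exact mul_nonneg (ha.nonneg z hz) (sq_nonneg _)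
  have hz := (hasSum_zero_iff_of_nonneg hnonneg).mp hs
  have hpair : ∀ x, latticePairing x v = 0 := by
    intro x
    have hx : x ∈ AddSubgroup.closure {z | 0 < a z} := hirr ▸ AddSubgroup.mem_top x
    induction hx using AddSubgroup.closure_induction with
    | mem z hz' =>
      have h1 := congrFun hz z
      simpa [(show 0 < a z from hz').ne'] using h1
    | zero => exact latticePairing_zero v
    | add x y _ _ hx hy => rw [latticePairing_add, hx, hy, add_zero]
    | neg x _ hx => rw [latticePairing_neg, hx, neg_zero]
  ext i
  simpa [latticePairing, Pi.single_apply] using hpair (Pi.single i 1)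

/-- For `d = 2` and `x, y ≠ 0`, `x ≠ y`: the strict triangle inequality
`ρ₂(x) + ρ₂(y-x) > ρ₂(y)` holds, so that `C₂(x,y) > 0`. -/
theorem rho_strict_triangle_d2
    (a : (Fin 2 → ℤ) → ℝ)
    (hpos : ∀ z : Fin 2 → ℤ, z ≠ 0 → 0 ≤ a z)
    (hneg : a 0 < 0)
    (hsymm : ∀ z : Fin 2 → ℤ, a (-z) = a z)
    (hsum : HasSum a 0)
    (hvar : Summable fun z : Fin 2 → ℤ => (∑ i, ((z i : ℝ)) ^ 2) * a z)
    (hirr : AddSubgroup.closure {z : Fin 2 → ℤ | 0 < a z} = ⊤)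
    (x y : Fin 2 → ℤ) (hy : y ≠ 0) (hx : x ≠ 0) (hxy : x ≠ y) :
    rhoConst 2 a y < rhoConst 2 a x + rhoConst 2 a (y - x) ∧
    0 < (rhoConst 2 a (y - x) + rhoConst 2 a x - rhoConst 2 a y) /
        (4 * (-(a 0)) * gammaConst 2 a) := by
  have ha : IsSymmetricRate a := ⟨hpos, hsymm, hsum⟩
  have hyx : y - x ≠ 0 := sub_ne_zero.mpr hxy.symm
  have hγ : 0 < gammaConst 2 a := by
    have hdet := abs_pos.mpr (ha.det_hessPhi_ne_zero hvar hirr)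
    unfold gammaConst
    positivity
  have hK := ha.killedKernel_pos hneg.le hirr hx (sub_ne_zero.mpr hxy)
  have hc : 0 < -(a 0) / (2 * π) ^ 2 := div_pos (neg_pos.mpr hneg) (by positivity)
  have heven : ∀ v, potentialKernel a 0 (-v) = potentialKernel a 0 v := fun v => by
    simp only [potentialKernel, latticePairing_neg, Real.cos_neg]
  rw [killedKernel, ← neg_sub y x, heven, neg_sub, sub_sub_cancel_left, heven] at hK
  have hlt : rhoConst 2 a y < rhoConst 2 a x + rhoConst 2 a (y - x) := by
    rw [rhoConst_eq a hx, rhoConst_eq a hy, rhoConst_eq a hyx, ← mul_add]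
    exact mul_lt_mul_of_pos_left (by linarith) hc
  exact ⟨hlt, div_pos (by linarith) (mul_pos (by linarith) hγ)⟩
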